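/- arXiv:1912.13043 — 2 statements merged into one kernel-verified Lean document; each statement's English description precedes it below -/
import Mathlib

section
/- Let N ⊆ E be a closed subset, let p ∈ N be rigid with respect to N in E, and let ψ be a symplectic homeomorphism of E. Then ψ(p) is rigid with respect to ψ(N) in E. (Invariance of rigidity under symplectic homeomorphisms, in the standard symplectic vector space.) -/
/-! For a symplectomorphism `Ψ` of `E` and a Hamiltonian flow `Φ` of `H`, the conjugate
`Ψ⁻¹ ∘ Φ t ∘ Ψ` is the Hamiltonian flow of `(t, z) ↦ H (t, Ψ z)`, which has the same oscillation
as `H`; so conjugation by `Ψ` does not increase the Hofer norm (`hoferNorm_conj_le`).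

Let `U` be a neighbourhood of `ψ p` and let `Ψ m` be symplectomorphisms converging to `ψ`
together with their inverses. Choose compact neighbourhoods `C` of `p` and `K ⊆ U` of `ψ p` with
`ψ(C) ⊆ interior K`, and let `V = interior C`. If `φ` displaces the closure of `U` from `ψ(N)`,
then `φ(K)` is compact (Hamiltonian flows depend continuously on the initial point, by Grönwall)
and `ψ⁻¹(φ(K))` lies in the open set `Nᶜ`. By uniform convergence on `C` and on `φ(K)`, for large
`m` one has `Ψ m (C) ⊆ K` and `(Ψ m)⁻¹(φ(K)) ⊆ Nᶜ`, so `(Ψ m)⁻¹ ∘ φ ∘ Ψ m` displaces the closure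
of `V` from `N`. Hence `e(V, N) ≤ e(U, ψ(N))`, and the left side is positive since `p` is rigid. -/

open scoped ENNReal Topology

noncomputable section

/-- The standard symplectic vector space `E = ℝⁿ × ℝⁿ`. -/
abbrev E (n : ℕ) := (Fin n → ℝ) × (Fin n → ℝ)

/-- The standard symplectic form `ω₀((x,y),(x',y')) = ⟨x,y'⟩ − ⟨y,x'⟩`. -/
def omega0 (n : ℕ) (z w : E n) : ℝ :=
  (∑ i, z.1 i * w.2 i) - ∑ i, z.2 i * w.1 i

/-- The Hamiltonian vector field `X_{H_t}(x,y) = (∂_y H(t,x,y), −∂_x H(t,x,y))`. -/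
def XH (n : ℕ) (H : ℝ × E n → ℝ) (t : ℝ) (z : E n) : E n :=
  ((fun i => fderiv ℝ (fun w => H (t, w)) z (0, Pi.single i 1)),
   (fun i => -fderiv ℝ (fun w => H (t, w)) z (Pi.single i 1, 0)))

/-- `Φ` is the Hamiltonian flow of `H`: `Φ 0 = id` and `(d/dt) Φ t z = X_{H_t} (Φ t z)`. -/
def IsHamFlow (n : ℕ) (H : ℝ × E n → ℝ) (Φ : ℝ → E n → E n) : Prop :=
  (∀ z, Φ 0 z = z) ∧ ∀ z t, HasDerivAt (fun s => Φ s z) (XH n H t (Φ t z)) t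

/-- `H : ℝ × E → ℝ` is smooth with support a compact subset of `[0,1] × W`. -/
def AdmissibleH (n : ℕ) (W : Set (E n)) (H : ℝ × E n → ℝ) : Prop :=
  ContDiff ℝ (⊤ : ℕ∞) H ∧ IsCompact (tsupport H) ∧
    tsupport H ⊆ Set.Icc (0 : ℝ) 1 ×ˢ W

/-- `Ham(W)`: time-one maps of Hamiltonian flows of admissible Hamiltonians. -/
def HamGrp (n : ℕ) (W : Set (E n)) : Set (E n → E n) :=
  {φ | ∃ H Φ, AdmissibleH n W H ∧ IsHamFlow n H Φ ∧ φ = Φ 1}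

/-- `‖H‖ = ∫₀¹ (sup H(t,·) − inf H(t,·)) dt`. -/
def HNorm (n : ℕ) (H : ℝ × E n → ℝ) : ℝ :=
  ∫ t in (0:ℝ)..(1:ℝ),
    (sSup (Set.range fun z => H (t, z)) - sInf (Set.range fun z => H (t, z)))

/-- The Hofer norm `‖φ‖_W` of `φ ∈ Ham(W)`. -/
def hoferNorm (n : ℕ) (W : Set (E n)) (φ : E n → E n) : ℝ :=
  sInf {c | ∃ H Φ, AdmissibleH n W H ∧ IsHamFlow n H Φ ∧ φ = Φ 1 ∧ c = HNorm n H}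

/-- The displacement energy `e_W(U,N)`, valued in `ℝ≥0∞` (so `inf ∅ = ⊤`).
`closure U ∩ W` is the closure of `U` in `W`. -/
def dispE (n : ℕ) (W U N : Set (E n)) : ℝ≥0∞ :=
  sInf {c | ∃ φ ∈ HamGrp n W, φ '' (closure U ∩ W) ∩ N = ∅ ∧
    c = ENNReal.ofReal (hoferNorm n W φ)}

/-- `p` is rigid with respect to `N` in `W`. -/
def RigidWrt (n : ℕ) (W N : Set (E n)) (p : E n) : Prop :=
  ∀ U : Set (E n), IsOpen U → p ∈ U → U ⊆ W → 0 < dispE n W U N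

/-- `N` is a subset of `W` which is closed as a subset of `W`. -/
def ClosedIn (n : ℕ) (W N : Set (E n)) : Prop :=
  N ⊆ W ∧ closure N ∩ W ⊆ N

/-- `N` is locally closed. -/
def LocallyClosedSet (n : ℕ) (N : Set (E n)) : Prop :=
  ∀ q ∈ N, ∃ V : Set (E n), IsOpen V ∧ q ∈ V ∧ ClosedIn n V (N ∩ V)

/-- `p` is locally rigid with respect to `N`. -/
def LocRigid (n : ℕ) (N : Set (E n)) (p : E n) : Prop :=
  ∃ W : Set (E n), IsOpen W ∧ p ∈ W ∧ ClosedIn n W (N ∩ W) ∧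
    RigidWrt n W (N ∩ W) p

/-- `ψ` is a symplectomorphism from the open set `W` onto its (open) image. -/
def IsSymplecto (n : ℕ) (W : Set (E n)) (ψ : E n → E n) : Prop :=
  IsOpen W ∧ IsOpen (ψ '' W) ∧ Set.InjOn ψ W ∧ ContDiffOn ℝ (⊤ : ℕ∞) ψ W ∧
  (∃ g : E n → E n, ContDiffOn ℝ (⊤ : ℕ∞) g (ψ '' W) ∧ ∀ z ∈ W, g (ψ z) = z) ∧
  ∀ z ∈ W, ∀ u v, omega0 n (fderiv ℝ ψ z u) (fderiv ℝ ψ z v) = omega0 n u v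

/-- `ψ` is a symplectic homeomorphism of `E`: a homeomorphism which is a `C⁰`-limit
(uniformly on compact sets, together with inverses) of symplectomorphisms of `E` onto `E`. -/
def IsSympHomeo (n : ℕ) (ψ : E n ≃ₜ E n) : Prop :=
  ∃ Ψ : ℕ → E n ≃ E n,
    (∀ m, IsSymplecto n Set.univ (Ψ m)) ∧
    TendstoLocallyUniformly (fun m z => Ψ m z) (fun z => ψ z) Filter.atTop ∧
    TendstoLocallyUniformly (fun m z => (Ψ m).symm z) (fun z => ψ.symm z) Filter.atTop

/-- A fixed `k`-dimensional coordinate subspace `ℝᵏ × {0}` of `E`. -/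
def coordSubspace (n k : ℕ) : Set (E n) :=
  {z | (∀ i : Fin n, k ≤ (i : ℕ) → z.1 i = 0) ∧
       (∀ i : Fin n, k ≤ n + (i : ℕ) → z.2 i = 0)}

/-- `N` is a smooth `k`-dimensional submanifold of `E`. -/
def IsSubmanifold (n k : ℕ) (N : Set (E n)) : Prop :=
  ∀ p ∈ N, ∃ (V : Set (E n)) (Φ : E n → E n),
    IsOpen V ∧ p ∈ V ∧ IsOpen (Φ '' V) ∧ Set.InjOn Φ V ∧
    ContDiffOn ℝ (⊤ : ℕ∞) Φ V ∧
    (∃ g : E n → E n, ContDiffOn ℝ (⊤ : ℕ∞) g (Φ '' V) ∧ ∀ z ∈ V, g (Φ z) = z) ∧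
    Φ '' (N ∩ V) = coordSubspace n k ∩ Φ '' V

/-- The tangent space `T_pN`, as velocities of curves through `p` lying locally in `N`. -/
def TangentSet (n : ℕ) (N : Set (E n)) (p : E n) : Set (E n) :=
  {v | ∃ γ : ℝ → E n, γ 0 = p ∧ (∀ᶠ t in 𝓝 (0:ℝ), γ t ∈ N) ∧ HasDerivAt γ v 0}

/-- The symplectic orthogonal complement `T^{ω₀}`. -/
def symplOrth (n : ℕ) (T : Set (E n)) : Set (E n) :=
  {v | ∀ u ∈ T, omega0 n v u = 0}

/-- `N` is coisotropic: `(T_pN)^{ω₀} ⊆ T_pN` for all `p ∈ N`. -/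
def IsCoisotropic (n : ℕ) (N : Set (E n)) : Prop :=
  ∀ p ∈ N, symplOrth n (TangentSet n N p) ⊆ TangentSet n N p

/-- `N` is Lagrangian: `(T_pN)^{ω₀} = T_pN` for all `p ∈ N`. -/
def IsLagrangian (n : ℕ) (N : Set (E n)) : Prop :=
  ∀ p ∈ N, symplOrth n (TangentSet n N p) = TangentSet n N p

/-- `Σ_N`: Hamiltonian diffeomorphisms preserving `N`. -/
def SigmaGrp (n : ℕ) (N : Set (E n)) : Set (E n → E n) :=
  {φ | φ ∈ HamGrp n Set.univ ∧ φ '' N = N}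

/-- `Σ̄_N`: the closure of `Σ_N` in the Hofer metric. -/
def SigmaBar (n : ℕ) (N : Set (E n)) : Set (E n → E n) :=
  {φ | φ ∈ HamGrp n Set.univ ∧ ∀ ε : ℝ, 0 < ε →
    ∃ ψ ∈ SigmaGrp n N, ∃ χ : E n → E n,
      Function.LeftInverse χ ψ ∧ Function.RightInverse χ ψ ∧
      hoferNorm n Set.univ (χ ∘ φ) < ε}

/-- The rigid locus `R_N = ⋂_{φ ∈ Σ̄_N} φ⁻¹(N)`. -/
def rigidLocus (n : ℕ) (N : Set (E n)) : Set (E n) :=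
  ⋂ φ ∈ SigmaBar n N, φ ⁻¹' N

/-- The characterization `ω₀(X_{H_t}(z), v) = D_z H(t, ·)(v)`. -/
lemma omega0_XH (n : ℕ) (H : ℝ × E n → ℝ) (t : ℝ) (z v : E n) :
    omega0 n (XH n H t z) v = fderiv ℝ (fun w => H (t, w)) z v := by
  have hsum : ∀ L : (Fin n → ℝ) →ₗ[ℝ] ℝ, ∀ x, L x = ∑ i, L (Pi.single i 1) * x i := by
    intro L x
    conv_lhs => rw [LinearMap.pi_apply_eq_sum_univ L x]
    refine Finset.sum_congr rfl fun i _ => ?_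
    rw [smul_eq_mul, mul_comm]
    congr 2
    ext j
    simp [Pi.single_apply, eq_comm]
  set D := fderiv ℝ (fun w => H (t, w)) z with hD
  have h1 := hsum (D.toLinearMap ∘ₗ LinearMap.inl ℝ _ _) v.1
  have h2 := hsum (D.toLinearMap ∘ₗ LinearMap.inr ℝ _ _) v.2
  have hv : v = (v.1, 0) + (0, v.2) := by ext <;> simp
  conv_rhs => rw [hv, map_add]
  simp only [LinearMap.comp_apply, LinearMap.inl_apply, LinearMap.inr_apply,
    ContinuousLinearMap.coe_coe] at h1 h2
  rw [h1, h2]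
  simp only [omega0, XH, ← hD, neg_mul, Finset.sum_neg_distrib]
  ring

/-- Nondegeneracy of `ω₀`. -/
lemma omega0_ext (n : ℕ) {a b : E n} (h : ∀ v, omega0 n a v = omega0 n b v) : a = b := by
  ext i
  · simpa [omega0, Pi.single_apply] using h (0, Pi.single i 1)
  · simpa [omega0, Pi.single_apply] using h (Pi.single i 1, 0)

lemma IsSymplecto.contDiff {n : ℕ} {Ψ : E n ≃ E n} (h : IsSymplecto n Set.univ Ψ) :
    ContDiff ℝ (⊤ : ℕ∞) Ψ := contDiffOn_univ.1 h.2.2.2.1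

lemma IsSymplecto.contDiff_symm {n : ℕ} {Ψ : E n ≃ E n} (h : IsSymplecto n Set.univ Ψ) :
    ContDiff ℝ (⊤ : ℕ∞) Ψ.symm := by
  obtain ⟨g, hg, hgl⟩ := h.2.2.2.2.1
  rw [Set.image_univ, Ψ.surjective.range_eq, contDiffOn_univ] at hg
  have : g = Ψ.symm := by
    ext1 z
    simpa using hgl (Ψ.symm z) trivial
  exact this ▸ hg

/-- Naturality of Hamiltonian vector fields under a symplectomorphism. -/
lemma XH_conj {n : ℕ} {Ψ : E n ≃ E n} (h : IsSymplecto n Set.univ Ψ)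
    {H : ℝ × E n → ℝ} (hH : ContDiff ℝ (⊤ : ℕ∞) H) (t : ℝ) (y : E n) :
    fderiv ℝ Ψ.symm y (XH n H t y) =
      XH n (fun q => H (q.1, Ψ q.2)) t (Ψ.symm y) := by
  have hd : Differentiable ℝ Ψ := h.contDiff.differentiable (by simp)
  have hds : Differentiable ℝ Ψ.symm := h.contDiff_symm.differentiable (by simp)
  have hHd : Differentiable ℝ (fun w => H (t, w)) :=
    (hH.differentiable (by simp)).comp (by fun_prop)
  have hinv : ∀ u, fderiv ℝ Ψ (Ψ.symm y) (fderiv ℝ Ψ.symm y u) = u := by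
    intro u
    have h1 : HasFDerivAt (fun z => Ψ (Ψ.symm z))
        ((fderiv ℝ Ψ (Ψ.symm y)).comp (fderiv ℝ Ψ.symm y)) y :=
      (hd _).hasFDerivAt.comp y (hds y).hasFDerivAt
    simp only [Equiv.apply_symm_apply] at h1
    simpa using DFunLike.congr_fun (h1.unique (hasFDerivAt_id y)) u
  refine omega0_ext n fun v => ?_
  have hc : HasFDerivAt (fun w => H (t, Ψ w))
      ((fderiv ℝ (fun w => H (t, w)) (Ψ (Ψ.symm y))).comp (fderiv ℝ Ψ (Ψ.symm y)))
      (Ψ.symm y) :=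
    (hHd (Ψ (Ψ.symm y))).hasFDerivAt.comp (Ψ.symm y) (hd _).hasFDerivAt
  rw [omega0_XH, hc.fderiv, ← h.2.2.2.2.2 (Ψ.symm y) trivial, hinv, omega0_XH]
  simp

lemma IsHamFlow.conj {n : ℕ} {Ψ : E n ≃ E n} (h : IsSymplecto n Set.univ Ψ)
    {H : ℝ × E n → ℝ} (hH : ContDiff ℝ (⊤ : ℕ∞) H) {Φ : ℝ → E n → E n}
    (hΦ : IsHamFlow n H Φ) :
    IsHamFlow n (fun q => H (q.1, Ψ q.2)) (fun t z => Ψ.symm (Φ t (Ψ z))) := by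
  refine ⟨fun z => by simp [hΦ.1], fun z t => ?_⟩
  have hds : Differentiable ℝ Ψ.symm := h.contDiff_symm.differentiable (by simp)
  rw [← XH_conj h hH]
  exact (hds (Φ t (Ψ z))).hasFDerivAt.comp_hasDerivAt t (hΦ.2 (Ψ z) t)

lemma AdmissibleH.conj {n : ℕ} {Ψ : E n ≃ E n} (h : IsSymplecto n Set.univ Ψ)
    {H : ℝ × E n → ℝ} (hH : AdmissibleH n Set.univ H) :
    AdmissibleH n Set.univ (fun q => H (q.1, Ψ q.2)) := by
  let Θ : E n ≃ₜ E n :=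
    { Ψ with
      continuous_toFun := h.contDiff.continuous
      continuous_invFun := h.contDiff_symm.continuous }
  let e : ℝ × E n ≃ₜ ℝ × E n := (Homeomorph.refl ℝ).prodCongr Θ
  have ht : tsupport (fun q => H (q.1, Ψ q.2)) = e ⁻¹' tsupport H :=
    tsupport_comp_eq_preimage H e
  have := h.contDiff
  refine ⟨hH.1.comp (by fun_prop), ?_, ?_⟩
  · rw [ht]
    exact e.isCompact_preimage.2 hH.2.1
  · rw [ht]
    intro q hq
    exact ⟨(hH.2.2 hq).1, trivial⟩

lemma HNorm_conj {n : ℕ} (Ψ : E n ≃ E n) (H : ℝ × E n → ℝ) :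
    HNorm n (fun q => H (q.1, Ψ q.2)) = HNorm n H := by
  have : ∀ t, (Set.range fun z => H (t, Ψ z)) = Set.range fun z => H (t, z) := fun t =>
    Ψ.surjective.range_comp fun z => H (t, z)
  simp only [HNorm, this]

lemma HNorm_nonneg {n : ℕ} {W : Set (E n)} {H : ℝ × E n → ℝ} (hH : AdmissibleH n W H) :
    0 ≤ HNorm n H := by
  obtain ⟨C, hC⟩ := HasCompactSupport.exists_bound_of_continuous (f := H) hH.2.1 hH.1.continuous
  refine intervalIntegral.integral_nonneg zero_le_one fun t _ => sub_nonneg.2 ?_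
  refine Real.sInf_le_sSup _ ⟨-C, ?_⟩ ⟨C, ?_⟩
  · rintro _ ⟨z, rfl⟩
    exact (abs_le.1 (hC (t, z))).1
  · rintro _ ⟨z, rfl⟩
    exact (abs_le.1 (hC (t, z))).2

/-- Conjugation by a symplectomorphism does not increase the Hofer norm: every Hamiltonian
generating `φ` yields one of the same norm generating the conjugate. -/
lemma hoferNorm_conj_le {n : ℕ} {Ψ : E n ≃ E n} (h : IsSymplecto n Set.univ Ψ)
    {φ : E n → E n} (hφ : φ ∈ HamGrp n Set.univ) :
    hoferNorm n Set.univ (fun z => Ψ.symm (φ (Ψ z))) ≤ hoferNorm n Set.univ φ := by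
  refine csInf_le_csInf ⟨0, ?_⟩ ?_ ?_
  · rintro _ ⟨H, Φ, hH, -, -, rfl⟩
    exact HNorm_nonneg hH
  · obtain ⟨H, Φ, hH, hΦ, e⟩ := hφ
    exact ⟨_, H, Φ, hH, hΦ, e, rfl⟩
  · rintro _ ⟨H, Φ, hH, hΦ, rfl, rfl⟩
    exact ⟨_, _, hH.conj h, hΦ.conj h hH.1, rfl, (HNorm_conj Ψ H).symm⟩

lemma HamGrp_conj {n : ℕ} {Ψ : E n ≃ E n} (h : IsSymplecto n Set.univ Ψ)
    {φ : E n → E n} (hφ : φ ∈ HamGrp n Set.univ) :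
    (fun z => Ψ.symm (φ (Ψ z))) ∈ HamGrp n Set.univ := by
  obtain ⟨H, Φ, hH, hΦ, rfl⟩ := hφ
  exact ⟨_, _, hH.conj h, hΦ.conj h hH.1, rfl⟩

lemma XH_lipschitz {n : ℕ} {W : Set (E n)} {H : ℝ × E n → ℝ} (hH : AdmissibleH n W H) :
    ∃ C : NNReal, ∀ t, LipschitzWith C (XH n H t) := by
  obtain ⟨C, hC⟩ := ContDiff.lipschitzWith_of_hasCompactSupport (𝕂 := ℝ)
    (HasCompactSupport.fderiv (𝕜 := ℝ) (f := H) hH.2.1)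
    (hH.1.fderiv_right (m := 1) (by norm_cast)) (by simp)
  have hf : ∀ t z v, fderiv ℝ (fun w => H (t, w)) z v = fderiv ℝ H (t, z) (0, v) := by
    intro t z v
    have h1 : HasFDerivAt (fun w => H (t, w))
        ((fderiv ℝ H (t, z)).comp (ContinuousLinearMap.inr ℝ ℝ (E n))) z :=
      ((hH.1.differentiable (by simp)) (t, z)).hasFDerivAt.comp z (hasFDerivAt_prodMk_right t z)
    rw [h1.fderiv]
    simp
  have key : ∀ t z z' (v : E n), ‖v‖ ≤ 1 →
      ‖fderiv ℝ H (t, z) (0, v) - fderiv ℝ H (t, z') (0, v)‖ ≤ C * dist z z' := by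
    intro t z z' v hv
    rw [← sub_apply]
    refine (ContinuousLinearMap.le_of_opNorm_le _ (c := C * dist z z') ?_ _).trans ?_
    · rw [← dist_eq_norm]
      simpa [Prod.dist_eq] using hC.dist_le_mul (t, z) (t, z')
    · refine mul_le_of_le_one_right (by positivity) ?_
      rw [Prod.norm_mk]
      simpa using hv
  have hs : ∀ i : Fin n, ‖(Pi.single i 1 : Fin n → ℝ)‖ ≤ 1 := by
    intro i
    simp [Pi.norm_single]
  refine ⟨C, fun t => LipschitzWith.of_dist_le_mul fun z z' => ?_⟩
  rw [Prod.dist_eq, max_le_iff, dist_pi_le_iff (by positivity), dist_pi_le_iff (by positivity)]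
  refine ⟨fun i => ?_, fun i => ?_⟩
  · simp only [XH, hf, dist_eq_norm (E := ℝ)]
    exact key t z z' _ (by rw [Prod.norm_mk]; simpa using hs i)
  · simp only [XH, hf]
    rw [dist_neg_neg, dist_eq_norm]
    exact key t z z' _ (by rw [Prod.norm_mk]; simpa using hs i)

lemma HamGrp_continuous {n : ℕ} {W : Set (E n)} {φ : E n → E n} (hφ : φ ∈ HamGrp n W) :
    Continuous φ := by
  obtain ⟨H, Φ, hH, hΦ, rfl⟩ := hφ
  obtain ⟨C, hC⟩ := XH_lipschitz hH
  refine LipschitzWith.continuous (K := ⟨Real.exp C, (Real.exp_pos _).le⟩)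
    (LipschitzWith.of_dist_le_mul fun z z' => ?_)
  have := dist_le_of_trajectories_ODE (v := XH n H) (K := C) (a := 0) (b := 1)
    (f := fun s => Φ s z) (g := fun s => Φ s z') (δ := dist z z') (fun t => hC t)
    (fun t _ => (hΦ.2 z t).continuousAt.continuousWithinAt)
    (fun t _ => (hΦ.2 z t).hasDerivWithinAt)
    (fun t _ => (hΦ.2 z' t).continuousAt.continuousWithinAt)
    (fun t _ => (hΦ.2 z' t).hasDerivWithinAt)
    (by simp [hΦ.1]) 1 (by simp)
  rw [mul_comm]
  rw [sub_zero, mul_one] at this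
  exact this

/-- Locally uniform convergence eventually maps a compact set into any open set containing its
image under the limit. -/
lemma eventually_mapsTo_of_isCompact {X : Type*} [PseudoMetricSpace X] {F : ℕ → X → X} {f : X → X}
    (hF : TendstoLocallyUniformly F f Filter.atTop) (hf : Continuous f) {K O : Set X}
    (hK : IsCompact K) (hO : IsOpen O) (h : Set.MapsTo f K O) :
    ∀ᶠ m in Filter.atTop, Set.MapsTo (F m) K O := by
  obtain ⟨δ, hδ, hsub⟩ := (hK.image hf).exists_thickening_subset_open hO h.image_subset
  have hu := (tendstoLocallyUniformlyOn_iff_tendstoUniformlyOn_of_compact hK).1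
    hF.tendstoLocallyUniformlyOn
  filter_upwards [Metric.tendstoUniformlyOn_iff.1 hu δ hδ] with m hm z hz
  refine hsub (Metric.mem_thickening_iff.2 ⟨f z, Set.mem_image_of_mem f hz, ?_⟩)
  rw [dist_comm]
  exact hm z hz

/-- invariance of rigidity under symplectic homeomorphisms. -/
theorem rigid_invariant_under_symplectic_homeo
    (n : ℕ) (hn : 1 ≤ n) (N : Set (E n)) (hN : IsClosed N)
    (p : E n) (hp : p ∈ N) (hrig : RigidWrt n Set.univ N p)
    (ψ : E n ≃ₜ E n) (hψ : IsSympHomeo n ψ) :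
    RigidWrt n Set.univ (⇑ψ '' N) (ψ p) := by
  intro U hU hpU _
  obtain ⟨Ψ, hΨ, hconv, hconv'⟩ := hψ
  obtain ⟨K, hK, hpK, hKU⟩ := exists_compact_subset hU hpU
  obtain ⟨C, hC, hpC, hCK⟩ :=
    exists_compact_subset (isOpen_interior.preimage ψ.continuous) (show p ∈ ψ ⁻¹' interior K from hpK)
  refine (hrig (interior C) isOpen_interior hpC (Set.subset_univ _)).trans_le ?_
  refine le_sInf ?_
  rintro _ ⟨φ, hφ, hdisj, rfl⟩
  have hφK : Set.MapsTo ψ.symm (φ '' K) Nᶜ := by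
    rintro _ ⟨z, hz, rfl⟩ hmem
    have : φ z ∈ φ '' (closure U ∩ Set.univ) ∩ ψ '' N :=
      ⟨⟨z, ⟨subset_closure (hKU hz), trivial⟩, rfl⟩, ⟨_, hmem, by simp⟩⟩
    rw [hdisj] at this
    exact this
  obtain ⟨m, hm1, hm2⟩ :=
    ((eventually_mapsTo_of_isCompact hconv ψ.continuous hC isOpen_interior hCK).and
      (eventually_mapsTo_of_isCompact hconv' ψ.symm.continuous
        (hK.image (HamGrp_continuous hφ)) hN.isOpen_compl hφK)).exists
  refine (sInf_le ⟨_, HamGrp_conj (hΨ m) hφ, ?_, rfl⟩ : dispE n Set.univ (interior C) N ≤ _).trans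
    (ENNReal.ofReal_le_ofReal (hoferNorm_conj_le (hΨ m) hφ))
  rw [Set.eq_empty_iff_forall_notMem]
  rintro _ ⟨⟨z, ⟨hz, -⟩, rfl⟩, hzN⟩
  have hzC : z ∈ C := closure_minimal interior_subset hC.isClosed hz
  exact hm2 ⟨_, interior_subset (hm1 hzC), rfl⟩ hzN
end
end

section
/- Let N ⊆ E be a smooth submanifold such that every point p ∈ N is locally rigid with respect to N. Then N is coisotropic, i.e. (T_pN)^{ω₀} ⊆ T_pN for every p ∈ N. (Backward implication of the characterization: local rigidity of all points implies coisotropy.) -/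
/-!
Suppose `v` lies in `(T_pN)^ω₀` but not in `T_pN`. A chart of `N` at `p` gives smooth functions
`H` and `F` vanishing on `N` with `X_H(p) = v` and `DF_p(v) > 0`; `H` may be cut off to have
compact support in any prescribed neighbourhood `W` of `p` (`exists_defining_map`).

The flow of `s H`, with `s > 0` small, preserves the level set `{H = 0} ⊇ N` and strictly
increases `F` near `p`, so it pushes points near `p` which lie on `{H = 0}` off `{F = 0} ⊇ N`.
Its energy is reduced at no cost: replace `H` by `β_ε ∘ H` with `β_ε(x) = ε arctan (x / ε)`. Since
`β_ε` is injective with `β_ε(0) = 0` and `β_ε'(0) = 1`, the zero level set and the flow on it are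
unchanged; since `0 ≤ β_ε' ≤ 1`, the speed is bounded independently of `ε`; and the oscillation is
`O(ε)`. A trajectory of the new flow which ends on `N` lies on `{H = 0}` throughout, by conservation
of the Hamiltonian, so `F` has increased along it by at least `s c > 0`; this is impossible if
it starts in a small ball `U` around `p` that does not depend on `ε` (`curve_not_mem`). Hence `U` is
displaced from `N` with arbitrarily small energy and `p` is not rigid (`not_rigid`).

To obtain a Hamiltonian supported in `[0,1]` in time, the autonomous flow is reparametrized by the
smooth step `Real.smoothTransition`, i.e. `H` is multiplied by the derivative of that function
(`exists_hamFlow`).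
-/


open scoped ENNReal Topology

noncomputable section

/-! ### Symplectic linear algebra -/

/-- The isomorphism from covectors to vectors induced by `ω₀`: the vector `w` with
`ω₀(w, ·) = L`. Applied to `fderiv ℝ H z` it gives the Hamiltonian vector field of `H` at `z`. -/
def symplGrad (n : ℕ) : (E n →L[ℝ] ℝ) →L[ℝ] E n :=
  (ContinuousLinearMap.pi fun i =>
    ContinuousLinearMap.apply ℝ ℝ ((0, Pi.single i 1) : E n)).prod
  (ContinuousLinearMap.pi fun i =>
    -ContinuousLinearMap.apply ℝ ℝ ((Pi.single i 1, 0) : E n))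

lemma XH_eq_symplGrad (n : ℕ) (H : ℝ × E n → ℝ) (t : ℝ) (z : E n) :
    XH n H t z = symplGrad n (fderiv ℝ (fun w => H (t, w)) z) := rfl

lemma norm_symplGrad_le (n : ℕ) (L : E n →L[ℝ] ℝ) : ‖symplGrad n L‖ ≤ ‖L‖ := by
  refine max_le ?_ ?_ <;> refine (pi_norm_le_iff_of_nonneg (norm_nonneg _)).2 fun i => ?_
  · refine (L.le_opNorm (0, Pi.single i 1)).trans (mul_le_of_le_one_right (norm_nonneg _) ?_)
    simp [Prod.norm_def, Pi.norm_single]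
  · change ‖-L (Pi.single i 1, 0)‖ ≤ _
    rw [norm_neg]
    refine (L.le_opNorm (Pi.single i 1, 0)).trans (mul_le_of_le_one_right (norm_nonneg _) ?_)
    simp [Prod.norm_def, Pi.norm_single]

lemma apply_eq_sum (n : ℕ) (L : E n →L[ℝ] ℝ) (z : E n) :
    L z = ∑ i, z.1 i * L (Pi.single i 1, 0) + ∑ i, z.2 i * L (0, Pi.single i 1) := by
  have h1 := LinearMap.pi_apply_eq_sum_univ
    ((L : E n →ₗ[ℝ] ℝ).comp (LinearMap.inl ℝ (Fin n → ℝ) (Fin n → ℝ))) z.1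
  have h2 := LinearMap.pi_apply_eq_sum_univ
    ((L : E n →ₗ[ℝ] ℝ).comp (LinearMap.inr ℝ (Fin n → ℝ) (Fin n → ℝ))) z.2
  have hs : ∀ i : Fin n, (fun j => if i = j then (1 : ℝ) else 0) = Pi.single i 1 := by
    intro i; ext j; simp [Pi.single_apply, eq_comm]
  simp only [LinearMap.coe_comp, Function.comp_apply, LinearMap.inl_apply, LinearMap.inr_apply,
    ContinuousLinearMap.coe_coe, hs, smul_eq_mul] at h1 h2
  rw [← h1, ← h2, ← map_add]
  simp

/-- Conservation of energy: a function is constant along its own Hamiltonian vector field. -/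
lemma apply_symplGrad_self (n : ℕ) (L : E n →L[ℝ] ℝ) : L (symplGrad n L) = 0 := by
  rw [apply_eq_sum n L (symplGrad n L), ← Finset.sum_add_distrib]
  refine Finset.sum_eq_zero fun i _ => ?_
  simp only [symplGrad, ContinuousLinearMap.prod_apply, ContinuousLinearMap.pi_apply,
    ContinuousLinearMap.apply_apply, neg_apply]
  ring

/-- The covector `ω₀(v, ·)`. -/
def omegaCLM (n : ℕ) (v : E n) : E n →L[ℝ] ℝ :=
  LinearMap.toContinuousLinearMap
    { toFun := omega0 n v
      map_add' := fun a b => by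
        simp only [omega0, Prod.fst_add, Prod.snd_add, Pi.add_apply, mul_add,
          Finset.sum_add_distrib]
        ring
      map_smul' := fun c a => by
        simp only [omega0, Prod.smul_fst, Prod.smul_snd, Pi.smul_apply, smul_eq_mul, mul_sub,
          Finset.mul_sum, RingHom.id_apply]
        congr 1 <;> exact Finset.sum_congr rfl fun i _ => by ring }

lemma omegaCLM_apply (n : ℕ) (v u : E n) : omegaCLM n v u = omega0 n v u := rfl

lemma symplGrad_omegaCLM (n : ℕ) (v : E n) : symplGrad n (omegaCLM n v) = v := by
  refine Prod.ext (funext fun i => ?_) (funext fun i => ?_)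
  · change omega0 n v (0, Pi.single i 1) = v.1 i
    simp [omega0, Pi.single_apply]
  · change -omega0 n v (Pi.single i 1, 0) = v.2 i
    simp [omega0, Pi.single_apply]

/-! ### Functions defining a submanifold -/

/-- The coordinate projection of `E` with kernel `coordSubspace n k`; it keeps exactly the
coordinates required to vanish on that subspace. -/
def normalProj (n k : ℕ) : E n →L[ℝ] E n :=
  LinearMap.toContinuousLinearMap
    { toFun := fun z => (fun i => if k ≤ (i : ℕ) then z.1 i else 0,
        fun i => if k ≤ n + (i : ℕ) then z.2 i else 0)
      map_add' := fun a b => by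
        refine Prod.ext (funext fun i => ?_) (funext fun i => ?_) <;>
        · simp only [Prod.fst_add, Prod.snd_add, Pi.add_apply]
          split_ifs <;> simp
      map_smul' := fun c a => by
        refine Prod.ext (funext fun i => ?_) (funext fun i => ?_) <;>
        · simp only [Prod.smul_fst, Prod.smul_snd, Pi.smul_apply, RingHom.id_apply]
          split_ifs <;> simp }

lemma normalProj_apply (n k : ℕ) (z : E n) : normalProj n k z =
    (fun i : Fin n => if k ≤ (i : ℕ) then z.1 i else 0,
      fun i : Fin n => if k ≤ n + (i : ℕ) then z.2 i else 0) := rfl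

lemma normalProj_eq_zero {n k : ℕ} {z : E n} (hz : z ∈ coordSubspace n k) :
    normalProj n k z = 0 := by
  rw [normalProj_apply]
  refine Prod.ext (funext fun i => ?_) (funext fun i => ?_)
  · simpa using hz.1 i
  · simpa using hz.2 i

lemma add_smul_sub_normalProj_mem {n k : ℕ} {z : E n} (hz : z ∈ coordSubspace n k)
    (w : E n) (t : ℝ) : z + t • (w - normalProj n k w) ∈ coordSubspace n k := by
  rw [normalProj_apply]
  refine ⟨fun i hi => ?_, fun i hi => ?_⟩
  · simp [hz.1 i hi, hi]
  · simp [hz.2 i hi, hi]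

/-- Near `p` the map `A` is `z ↦ D(Φ⁻¹) (Q (Φ z))`, where `Φ` is a chart of `N` and `Q` the
projection `normalProj` to the normal coordinates; a bump function extends it by zero. Its
derivative at `p` is the identity modulo `T_pN`. -/
lemma exists_defining_map {n k : ℕ} {N : Set (E n)} (hN : IsSubmanifold n k N)
    {p : E n} (hp : p ∈ N) {W : Set (E n)} (hW : IsOpen W) (hpW : p ∈ W) :
    ∃ A : E n → E n, ContDiff ℝ (⊤ : ℕ∞) A ∧ HasCompactSupport A ∧ tsupport A ⊆ W ∧
      (∀ z ∈ N, A z = 0) ∧ ∀ u, u - fderiv ℝ A p u ∈ TangentSet n N p := by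
  obtain ⟨V, Φ, hV, hpV, hΦV, -, hΦ, ⟨g, hg, hgΦ⟩, himg⟩ := hN p hp
  have hΦp : Φ p ∈ coordSubspace n k ∩ Φ '' V := himg ▸ ⟨p, ⟨hp, hpV⟩, rfl⟩
  have hdΦ : DifferentiableAt ℝ Φ p :=
    (hΦ.contDiffAt (hV.mem_nhds hpV)).differentiableAt (by simp)
  have hdg : DifferentiableAt ℝ g (Φ p) :=
    (hg.contDiffAt (hΦV.mem_nhds hΦp.2)).differentiableAt (by simp)
  set G := fderiv ℝ g (Φ p) with hG
  have hinv : ∀ u, G (fderiv ℝ Φ p u) = u := by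
    have h1 : HasFDerivAt (g ∘ Φ) (G.comp (fderiv ℝ Φ p)) p :=
      hdg.hasFDerivAt.comp p hdΦ.hasFDerivAt
    have h2 : HasFDerivAt (g ∘ Φ) (ContinuousLinearMap.id ℝ (E n)) p :=
      (hasFDerivAt_id p).congr_of_eventuallyEq
        (Filter.eventuallyEq_of_mem (hV.mem_nhds hpV) fun z hz => hgΦ z hz)
    intro u
    exact congrArg (fun L => L u) (h1.unique h2)
  obtain ⟨ρ, hρ, hball⟩ := Metric.nhds_basis_closedBall.mem_iff.1
    ((hV.inter hW).mem_nhds ⟨hpV, hpW⟩)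
  let χ : ContDiffBump p := ⟨ρ / 2, ρ, half_pos hρ, half_lt_self hρ⟩
  have hχV : tsupport χ ⊆ V ∩ W := by rw [χ.tsupport_eq]; exact hball
  let A₀ : E n → E n := fun z => G (normalProj n k (Φ z))
  have hsupp : tsupport (fun z => χ z • A₀ z) ⊆ tsupport χ := tsupport_smul_subset_left _ _
  refine ⟨fun z => χ z • A₀ z, ?_, ?_, fun z hz => (hχV (hsupp hz)).2, ?_, ?_⟩
  · refine contDiff_iff_contDiffAt.2 fun z => ?_
    by_cases hz : z ∈ tsupport χ
    · have hzV := hV.mem_nhds (hχV hz).1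
      exact χ.contDiff.contDiffAt.smul
        ((G.comp (normalProj n k)).contDiff.contDiffAt.comp z (hΦ.contDiffAt hzV))
    · have h0 : (fun z => χ z • A₀ z) =ᶠ[𝓝 z] fun _ => 0 :=
        notMem_tsupport_iff_eventuallyEq.1 fun h => hz (hsupp h)
      exact contDiffAt_const.congr_of_eventuallyEq h0
  · exact χ.hasCompactSupport.smul_right
  · intro z hz
    by_cases hzχ : z ∈ tsupport χ
    · have hmem : Φ z ∈ coordSubspace n k ∩ Φ '' V := himg ▸ ⟨z, ⟨hz, (hχV hzχ).1⟩, rfl⟩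
      simp [A₀, normalProj_eq_zero hmem.1]
    · simp [image_eq_zero_of_notMem_tsupport hzχ]
  · intro u
    have hA₀ : HasFDerivAt A₀ ((G.comp (normalProj n k)).comp (fderiv ℝ Φ p)) p :=
      (G.comp (normalProj n k)).hasFDerivAt.comp p hdΦ.hasFDerivAt
    have hA : HasFDerivAt (fun z => χ z • A₀ z)
        ((G.comp (normalProj n k)).comp (fderiv ℝ Φ p)) p := by
      refine hA₀.congr_of_eventuallyEq ?_
      filter_upwards [χ.eventuallyEq_one] with z hz
      simp [hz]
    set w := fderiv ℝ Φ p u with hw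
    have hu : u - fderiv ℝ (fun z => χ z • A₀ z) p u = G (w - normalProj n k w) := by
      rw [hA.fderiv, map_sub, hw, hinv]
      rfl
    rw [hu]
    refine ⟨fun t => g (Φ p + t • (w - normalProj n k w)), by simp [hgΦ p hpV], ?_, ?_⟩
    · have hc : Filter.Tendsto (fun t : ℝ => Φ p + t • (w - normalProj n k w)) (𝓝 0)
          (𝓝 (Φ p)) := by
        have : Continuous fun t : ℝ => Φ p + t • (w - normalProj n k w) := by fun_prop
        simpa using this.tendsto 0
      filter_upwards [hc (hΦV.mem_nhds hΦp.2)] with t ht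
      have hmem : Φ p + t • (w - normalProj n k w) ∈ Φ '' (N ∩ V) :=
        himg ▸ ⟨add_smul_sub_normalProj_mem hΦp.1 w t, ht⟩
      obtain ⟨q, hq, hqt⟩ := hmem
      rw [← hqt, hgΦ q hq.2]
      exact hq.1
    · have hl : HasDerivAt (fun t : ℝ => Φ p + t • (w - normalProj n k w))
          (w - normalProj n k w) 0 := by
        simpa using ((hasDerivAt_id (0 : ℝ)).smul_const (w - normalProj n k w)).const_add (Φ p)
      have hg0 : HasFDerivAt g G (Φ p + (0 : ℝ) • (w - normalProj n k w)) := by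
        simpa using hdg.hasFDerivAt
      exact hg0.comp_hasDerivAt (0 : ℝ) hl

/-! ### Hamiltonian flows and the Hofer norm -/

/-- A bounded Lipschitz autonomous vector field has integral curves on `(-1, 2)`. The interval
only has to be an open neighbourhood of `[0, 1]`. -/
lemma exists_integral_curve {F : Type*} [NormedAddCommGroup F] [NormedSpace ℝ F]
    [CompleteSpace F] {X : F → F} {K : NNReal} (hX : LipschitzWith K X) {C : ℝ}
    (hC : ∀ z, ‖X z‖ ≤ C) (z : F) :
    ∃ γ : ℝ → F, γ 0 = z ∧ ∀ t ∈ Set.Ioo (-1 : ℝ) 2, HasDerivAt γ (X (γ t)) t := by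
  have hC0 : 0 ≤ C := (norm_nonneg _).trans (hC z)
  have hPL : IsPicardLindelof (fun _ => X) (tmin := -1) (tmax := 2) ⟨0, by norm_num, by norm_num⟩
      z (C.toNNReal * 2) 0 C.toNNReal K :=
    { lipschitzOnWith := fun _ _ => hX.lipschitzOnWith
      continuousOn := fun _ _ => continuousOn_const
      norm_le := fun _ _ x _ => by simpa [hC0] using hC x
      mul_max_le := by simp }
  obtain ⟨γ, h0, hγ⟩ := hPL.exists_eq_forall_mem_Icc_hasDerivWithinAt₀
  exact ⟨γ, h0, fun t ht =>
    (hγ t (Set.Ioo_subset_Icc_self ht)).hasDerivAt (Icc_mem_nhds ht.1 ht.2)⟩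

/-- With `θ = Real.smoothTransition`, the Hamiltonian `θ'(t) g(z)` is admissible, and its flow is
the flow `γ` of the autonomous Hamiltonian `g` run up to time `θ(t)`. -/
lemma exists_hamFlow {n : ℕ} {W : Set (E n)} {g : E n → ℝ} (hg : ContDiff ℝ (⊤ : ℕ∞) g)
    (hgc : HasCompactSupport g) (hgW : tsupport g ⊆ W) :
    ∃ γ : E n → ℝ → E n, (∀ z, γ z 0 = z) ∧
      (∀ z, ∀ t ∈ Set.Ioo (-1 : ℝ) 2,
        HasDerivAt (γ z) (symplGrad n (fderiv ℝ g (γ z t))) t) ∧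
      AdmissibleH n W (fun q => deriv Real.smoothTransition q.1 * g q.2) ∧
      IsHamFlow n (fun q => deriv Real.smoothTransition q.1 * g q.2)
        (fun t z => γ z (Real.smoothTransition t)) := by
  have hdg : ContDiff ℝ 1 (fderiv ℝ g) := hg.fderiv_right (by norm_cast)
  have hXc : ContDiff ℝ 1 fun z => symplGrad n (fderiv ℝ g z) := (symplGrad n).contDiff.comp hdg
  have hXs : HasCompactSupport fun z => symplGrad n (fderiv ℝ g z) :=
    (hgc.fderiv (𝕜 := ℝ)).comp_left (g := symplGrad n) (map_zero _)
  obtain ⟨K, hK⟩ := hXc.lipschitzWith_of_hasCompactSupport hXs one_ne_zero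
  obtain ⟨C, hC⟩ := hXs.exists_bound_of_continuous hXc.continuous
  choose γ hγ0 hγ using exists_integral_curve hK hC
  have hθ : ContDiff ℝ (⊤ : ℕ∞) Real.smoothTransition := Real.smoothTransition.contDiff
  have hθ' : ContDiff ℝ (⊤ : ℕ∞) (deriv Real.smoothTransition) :=
    (contDiff_infty_iff_deriv.1 hθ).2
  have hzero : ∀ t ∉ Set.Icc (0 : ℝ) 1, deriv Real.smoothTransition t = 0 := by
    intro t ht
    rcases lt_or_ge t 0 with h | h
    · have : Real.smoothTransition =ᶠ[𝓝 t] fun _ => 0 := by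
        filter_upwards [Iio_mem_nhds h] with s hs
        exact Real.smoothTransition.zero_of_nonpos (le_of_lt hs)
      simp [this.deriv_eq]
    · have h1 : 1 < t := by
        by_contra h1
        exact ht ⟨h, not_lt.1 h1⟩
      have : Real.smoothTransition =ᶠ[𝓝 t] fun _ => 1 := by
        filter_upwards [Ioi_mem_nhds h1] with s hs
        exact Real.smoothTransition.one_of_one_le (le_of_lt hs)
      simp [this.deriv_eq]
  have hts : tsupport (fun q : ℝ × E n => deriv Real.smoothTransition q.1 * g q.2) ⊆
      Set.Icc (0 : ℝ) 1 ×ˢ tsupport g := by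
    refine closure_minimal (fun q hq => ⟨?_, ?_⟩) (isClosed_Icc.prod (isClosed_tsupport g))
    · by_contra h
      exact hq (by simp [hzero _ h])
    · exact subset_tsupport g (right_ne_zero_of_mul hq)
  refine ⟨γ, hγ0, hγ, ⟨?_, ?_, ?_⟩, fun z => ?_, fun z t => ?_⟩
  · exact (hθ'.comp contDiff_fst).mul (hg.comp contDiff_snd)
  · exact (isCompact_Icc.prod hgc).of_isClosed_subset (isClosed_tsupport _) hts
  · exact hts.trans (Set.prod_mono le_rfl hgW)
  · simp [hγ0]
  · have hmem : Real.smoothTransition t ∈ Set.Ioo (-1 : ℝ) 2 :=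
      ⟨by linarith [Real.smoothTransition.nonneg t], by linarith [Real.smoothTransition.le_one t]⟩
    have h1 := (hγ z _ hmem).scomp t ((hθ.differentiable (by simp)) t).hasDerivAt
    rw [XH_eq_symplGrad]
    have h2 : fderiv ℝ (fun w => deriv Real.smoothTransition t * g w)
        (γ z (Real.smoothTransition t)) = deriv Real.smoothTransition t •
          fderiv ℝ g (γ z (Real.smoothTransition t)) :=
      fderiv_const_mul (hg.differentiable (by simp) _) _
    change HasDerivAt _ (symplGrad n (fderiv ℝ (fun w => deriv Real.smoothTransition t * g w)
        (γ z (Real.smoothTransition t)))) t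
    rw [h2, map_smul]
    exact h1

lemma exists_smoothTransition_deriv_bound :
    ∃ M : ℝ, 0 < M ∧ ∀ t ∈ Set.Icc (0 : ℝ) 1, |deriv Real.smoothTransition t| ≤ M := by
  have hθ : ContDiff ℝ (⊤ : ℕ∞) Real.smoothTransition := Real.smoothTransition.contDiff
  have hc : Continuous (deriv Real.smoothTransition) := hθ.continuous_deriv (by simp)
  obtain ⟨M, hM⟩ := isCompact_Icc.exists_bound_of_continuousOn (s := Set.Icc (0 : ℝ) 1)
    hc.continuousOn
  exact ⟨max M 1, by positivity, fun t ht => (hM t ht).trans (le_max_left _ _)⟩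

lemma HNorm_le {n : ℕ} {H : ℝ × E n → ℝ} {C : ℝ}
    (hH : ∀ t ∈ Set.Icc (0 : ℝ) 1, ∀ z, |H (t, z)| ≤ C) : HNorm n H ≤ 2 * C := by
  have h := intervalIntegral.norm_integral_le_of_norm_le_const (a := (0 : ℝ)) (b := 1) (C := 2 * C)
    (f := fun t => sSup (Set.range fun z => H (t, z)) - sInf (Set.range fun z => H (t, z))) ?_
  · have := (le_abs_self _).trans h
    simpa [HNorm] using this
  · intro t ht
    rw [Set.uIoc_of_le zero_le_one] at ht
    have hb := hH t (Set.Ioc_subset_Icc_self ht)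
    have hne : (Set.range fun z => H (t, z)).Nonempty := Set.range_nonempty _
    have h1 : sSup (Set.range fun z => H (t, z)) ≤ C :=
      csSup_le hne (by rintro _ ⟨z, rfl⟩; exact (abs_le.1 (hb z)).2)
    have h2 : -C ≤ sInf (Set.range fun z => H (t, z)) :=
      le_csInf hne (by rintro _ ⟨z, rfl⟩; exact (abs_le.1 (hb z)).1)
    have h3 : sInf (Set.range fun z => H (t, z)) ≤ sSup (Set.range fun z => H (t, z)) :=
      csInf_le_csSup hne ⟨-C, by rintro _ ⟨z, rfl⟩; exact (abs_le.1 (hb z)).1⟩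
        ⟨C, by rintro _ ⟨z, rfl⟩; exact (abs_le.1 (hb z)).2⟩
    rw [Real.norm_eq_abs, abs_le]
    constructor <;> linarith

/-- The bound `0 ≤ c` covers the junk value `0` of the real infimum of a set unbounded below. -/
lemma hoferNorm_le {n : ℕ} {W : Set (E n)} {H : ℝ × E n → ℝ} {Φ : ℝ → E n → E n} {c : ℝ}
    (hH : AdmissibleH n W H) (hΦ : IsHamFlow n H Φ) (h0 : 0 ≤ c) (hc : HNorm n H ≤ c) :
    hoferNorm n W (Φ 1) ≤ c := by
  by_cases hb : BddBelow {c | ∃ H' Φ', AdmissibleH n W H' ∧ IsHamFlow n H' Φ' ∧ Φ 1 = Φ' 1 ∧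
      c = HNorm n H'}
  · exact (csInf_le hb ⟨H, Φ, hH, hΦ, rfl, rfl⟩).trans hc
  · rw [hoferNorm, Real.sInf_of_not_bddBelow hb]
    exact h0

/-! ### Displacement with small energy -/

/-- The flattening function `β_ε(x) = ε arctan (x / ε)`: injective, zero at zero with slope one
there, slope in `[0, 1]` everywhere, and bounded by a multiple of `ε`. -/
def flatten (ε x : ℝ) : ℝ := ε * Real.arctan (x / ε)

lemma hasDerivAt_flatten {ε : ℝ} (hε : 0 < ε) (x : ℝ) :
    HasDerivAt (flatten ε) (1 + (x / ε) ^ 2)⁻¹ x := by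
  have h := (((hasDerivAt_id x).div_const ε).arctan).const_mul ε
  refine h.congr_deriv ?_
  simp only [id]
  field_simp

lemma flatten_eq_zero_iff {ε : ℝ} (hε : 0 < ε) {x : ℝ} : flatten ε x = 0 ↔ x = 0 := by
  simp [flatten, hε.ne', Real.arctan_eq_zero_iff]

lemma abs_flatten_le {ε : ℝ} (hε : 0 < ε) (x : ℝ) : |flatten ε x| ≤ 2 * ε := by
  have h1 := Real.arctan_lt_pi_div_two (x / ε)
  have h2 := Real.neg_pi_div_two_lt_arctan (x / ε)
  have h3 := Real.pi_le_four
  rw [flatten, abs_mul, abs_of_pos hε, mul_comm]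
  refine mul_le_mul_of_nonneg_right (abs_le.2 ⟨?_, ?_⟩) hε.le <;> linarith

/-- A trajectory of the Hamiltonian `s β_ε(H)` which starts near `p` does not end on `N` at time
one. If it did, `H` would vanish along it, so that it would be a trajectory of `s H`, and `F`
would increase by at least `s c` along it, whereas `F` vanishes on `N`. -/
lemma curve_not_mem {n : ℕ} {N : Set (E n)} {p : E n} {H F : E n → ℝ}
    (hH : Differentiable ℝ H) (hF : Differentiable ℝ F)
    (hHN : ∀ z ∈ N, H z = 0) (hFN : ∀ z ∈ N, F z = 0)
    {C c ρ s ε : ℝ} (hs : 0 < s) (hε : 0 < ε) (hC : ∀ z, ‖fderiv ℝ H z‖ ≤ C)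
    (hsC : s * C ≤ ρ / 2)
    (hc : ∀ z ∈ Metric.closedBall p ρ, c ≤ fderiv ℝ F z (symplGrad n (fderiv ℝ H z)))
    {γ : ℝ → E n}
    (hγ : ∀ t ∈ Set.Ioo (-1 : ℝ) 2, HasDerivAt γ
      (symplGrad n (fderiv ℝ (fun z => s * flatten ε (H z)) (γ t))) t)
    (h0 : γ 0 ∈ Metric.closedBall p (ρ / 2)) (hF0 : -(s * c) < F (γ 0)) :
    γ 1 ∉ N := by
  intro h1
  have hg : ∀ z, HasFDerivAt (fun z => s * flatten ε (H z))
      ((s * (1 + (H z / ε) ^ 2)⁻¹) • fderiv ℝ H z) z := by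
    intro z
    have := ((hasDerivAt_flatten hε (H z)).comp_hasFDerivAt z (hH z).hasFDerivAt).const_mul s
    rwa [smul_smul] at this
  have hIcc : Set.Icc (0 : ℝ) 1 ⊆ Set.Ioo (-1) 2 := fun t ht =>
    ⟨by linarith [ht.1], by linarith [ht.2]⟩
  have hspeed : ∀ z, ‖symplGrad n (fderiv ℝ (fun z => s * flatten ε (H z)) z)‖ ≤ ρ / 2 := by
    intro z
    refine (norm_symplGrad_le n _).trans (le_trans ?_ hsC)
    rw [(hg z).fderiv, norm_smul, Real.norm_eq_abs, abs_of_nonneg (by positivity), mul_assoc]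
    refine mul_le_mul_of_nonneg_left ?_ hs.le
    refine (mul_le_of_le_one_left (norm_nonneg _) ?_).trans (hC z)
    exact inv_le_one_of_one_le₀ (by linarith [sq_nonneg (H z / ε)])
  have hball : ∀ t ∈ Set.Icc (0 : ℝ) 1, γ t ∈ Metric.closedBall p ρ := by
    intro t ht
    have hm := norm_image_sub_le_of_norm_deriv_le_segment' (a := (0 : ℝ)) (b := 1)
      (fun x hx => (hγ x (hIcc hx)).hasDerivWithinAt) (fun x _ => hspeed (γ x)) t ht
    have hρ0 : 0 ≤ ρ / 2 := dist_nonneg.trans h0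
    have h2 : dist (γ t) (γ 0) ≤ ρ / 2 := by
      rw [dist_eq_norm]
      exact hm.trans (mul_le_of_le_one_right hρ0 (by linarith [ht.2]))
    have h3 := dist_triangle (γ t) (γ 0) p
    have h4 : dist (γ 0) p ≤ ρ / 2 := h0
    exact Metric.mem_closedBall.2 (by linarith)
  have hconst : ∀ t ∈ Set.Icc (0 : ℝ) 1, s * flatten ε (H (γ t)) = s * flatten ε (H (γ 0)) := by
    have hd : ∀ t ∈ Set.Icc (0 : ℝ) 1,
        HasDerivAt (fun t => s * flatten ε (H (γ t))) 0 t := by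
      intro t ht
      have := (hg (γ t)).differentiableAt.hasFDerivAt.comp_hasDerivAt t (hγ t (hIcc ht))
      rwa [apply_symplGrad_self] at this
    exact constant_of_has_deriv_right_zero
      (fun t ht => (hd t ht).continuousAt.continuousWithinAt)
      (fun t ht => (hd t (Set.Ico_subset_Icc_self ht)).hasDerivWithinAt)
  have hHzero : ∀ t ∈ Set.Icc (0 : ℝ) 1, H (γ t) = 0 := by
    intro t ht
    have h := (hconst t ht).trans (hconst 1 (by simp)).symm
    rw [hHN _ h1, (flatten_eq_zero_iff hε).2 rfl, mul_zero] at h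
    exact (flatten_eq_zero_iff hε).1 ((mul_eq_zero.1 h).resolve_left hs.ne')
  have hFd : ∀ t ∈ Set.Icc (0 : ℝ) 1, HasDerivAt (fun t => F (γ t))
      (s * fderiv ℝ F (γ t) (symplGrad n (fderiv ℝ H (γ t)))) t := by
    intro t ht
    have := (hF (γ t)).hasFDerivAt.comp_hasDerivAt t (hγ t (hIcc ht))
    refine this.congr_deriv ?_
    rw [(hg (γ t)).fderiv, hHzero t ht]
    simp
  obtain ⟨t, ht, hslope⟩ := exists_hasDerivAt_eq_slope (fun t => F (γ t)) _ zero_lt_one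
    (fun t ht => (hFd t ht).continuousAt.continuousWithinAt)
    (fun t ht => hFd t (Set.Ioo_subset_Icc_self ht))
  have hct := mul_le_mul_of_nonneg_left (hc _ (hball t (Set.Ioo_subset_Icc_self ht))) hs.le
  rw [hslope, hFN _ h1] at hct
  linarith

/-- If two functions vanishing on `N` have nonzero Poisson bracket at `p ∈ N`, then `p` is not
rigid. The sign of the bracket is normalized to be positive. -/
lemma not_rigid {n : ℕ} {W N : Set (E n)} (hW : IsOpen W) {p : E n} (hpW : p ∈ W) (hp : p ∈ N)
    {H F : E n → ℝ} (hH : ContDiff ℝ (⊤ : ℕ∞) H) (hHc : HasCompactSupport H)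
    (hHW : tsupport H ⊆ W) (hF : ContDiff ℝ (⊤ : ℕ∞) F)
    (hHN : ∀ z ∈ N, H z = 0) (hFN : ∀ z ∈ N, F z = 0)
    (hpos : 0 < fderiv ℝ F p (symplGrad n (fderiv ℝ H p))) :
    ¬ RigidWrt n W (N ∩ W) p := by
  intro hrig
  have hdH : Continuous (fderiv ℝ H) := hH.continuous_fderiv (by simp)
  have hdF : Continuous (fderiv ℝ F) := hF.continuous_fderiv (by simp)
  obtain ⟨c, hc0, hcp⟩ := exists_between hpos
  have hcont : Continuous fun z => fderiv ℝ F z (symplGrad n (fderiv ℝ H z)) :=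
    hdF.clm_apply ((symplGrad n).continuous.comp hdH)
  obtain ⟨ρ, hρ, hρc⟩ := Metric.nhds_basis_closedBall.mem_iff.1
    (hcont.continuousAt.eventually (lt_mem_nhds hcp))
  obtain ⟨C, hC⟩ := (hHc.fderiv (𝕜 := ℝ)).exists_bound_of_continuous hdH
  have hC0 : 0 ≤ C := (norm_nonneg _).trans (hC p)
  -- The factor `s` slows the flow down so that it moves points by at most `ρ / 2` up to time one.
  obtain ⟨s, hs, hsC⟩ : ∃ s : ℝ, 0 < s ∧ s * C ≤ ρ / 2 := by
    refine ⟨ρ / 2 / (C + 1), by positivity, ?_⟩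
    rw [div_mul_eq_mul_div, div_le_iff₀ (by positivity)]
    nlinarith
  have hFev : ∀ᶠ z in 𝓝 p, -(s * c) < F z := by
    refine hF.continuous.continuousAt.eventually (lt_mem_nhds ?_)
    rw [hFN p hp]
    linarith [mul_pos hs hc0]
  obtain ⟨r, hr, hrs⟩ := Metric.nhds_basis_closedBall.mem_iff.1
    (Filter.inter_mem (Filter.inter_mem hFev (Metric.closedBall_mem_nhds p (half_pos hρ)))
      (hW.mem_nhds hpW))
  have hpos' := hrig (Metric.ball p r) Metric.isOpen_ball (Metric.mem_ball_self hr)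
    fun z hz => (hrs (Metric.ball_subset_closedBall hz)).2
  -- The ball of radius `r` is now fixed; its displacement energy is shown to be below every `δ > 0`.
  obtain ⟨δ, hδ0, hδ⟩ := ENNReal.lt_iff_exists_nnreal_btwn.1 hpos'
  have hδ0' : (0 : ℝ) < δ := by exact_mod_cast hδ0
  obtain ⟨M, hM0, hM⟩ := exists_smoothTransition_deriv_bound
  obtain ⟨ε, hε, hεδ⟩ : ∃ ε : ℝ, 0 < ε ∧ 2 * (M * (s * (2 * ε))) = δ :=
    ⟨δ / (4 * M * s), by positivity, by field_simp; norm_num⟩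
  have hflat : ContDiff ℝ (⊤ : ℕ∞) (flatten ε) := by
    unfold flatten
    exact contDiff_const.mul (Real.contDiff_arctan.comp (contDiff_id.div_const ε))
  have hg : ContDiff ℝ (⊤ : ℕ∞) fun z => s * flatten ε (H z) :=
    contDiff_const.mul (hflat.comp hH)
  have hsub : tsupport (fun z => s * flatten ε (H z)) ⊆ tsupport H := by
    refine closure_mono fun z hz hHz => hz ?_
    simp [hHz, (flatten_eq_zero_iff hε).2 rfl]
  obtain ⟨γ, hγ0, hγ, hadm, hflow⟩ := exists_hamFlow hg
    (hHc.of_isClosed_subset (isClosed_tsupport _) hsub) (hsub.trans hHW)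
  have hnorm := hoferNorm_le hadm hflow hδ0'.le (hεδ ▸ HNorm_le fun t ht z => by
    rw [abs_mul, abs_mul, abs_of_pos hs]
    exact mul_le_mul (hM t ht) (mul_le_mul_of_nonneg_left (abs_flatten_le hε _) hs.le)
      (by positivity) hM0.le)
  have hle : dispE n W (Metric.ball p r) (N ∩ W) ≤
      ENNReal.ofReal (hoferNorm n W fun z => γ z (Real.smoothTransition 1)) := by
    refine sInf_le ⟨_, ⟨_, _, hadm, hflow, rfl⟩, ?_, rfl⟩
    refine Set.eq_empty_iff_forall_notMem.2 ?_
    rintro _ ⟨⟨z, hz, rfl⟩, hzN⟩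
    have hzr := hrs (Metric.closure_ball_subset_closedBall hz.1)
    refine curve_not_mem (hH.differentiable (by simp)) (hF.differentiable (by simp)) hHN hFN hs hε
      hC hsC (fun z hz => (hρc hz).le) (hγ z) ?_ ?_ (by simpa using hzN.1)
    · rw [hγ0]; exact hzr.1.2
    · rw [hγ0]; exact hzr.1.1
  refine absurd hδ (not_lt.2 (hle.trans ?_))
  rw [← ENNReal.ofReal_coe_nnreal]
  exact ENNReal.ofReal_le_ofReal hnorm

/-- local rigidity of all points implies coisotropy. -/
theorem coisotropic_of_locRigid
    (n : ℕ) (hn : 1 ≤ n) (k : ℕ) (N : Set (E n)) (hN : IsSubmanifold n k N)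
    (hrig : ∀ p ∈ N, LocRigid n N p) :
    IsCoisotropic n N := by
  intro p hp v hv
  by_contra hvT
  obtain ⟨W, hW, hpW, -, hr⟩ := hrig p hp
  obtain ⟨A, hA, hAc, hAW, hAN, hAT⟩ := exists_defining_map hN hp hW hpW
  have hAd : HasFDerivAt A (fderiv ℝ A p) p := (hA.differentiable (by simp) p).hasFDerivAt
  have hAv : fderiv ℝ A p v ≠ 0 := fun h => hvT (by simpa [h] using hAT v)
  -- The two functions are `H = ω₀(v, A ·)`, with `X_H(p) = v`, and `F = ℓ ∘ A`.
  obtain ⟨ℓ, -, hℓ⟩ := exists_dual_vector ℝ (fderiv ℝ A p v) (norm_ne_zero_iff.2 hAv)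
  -- `DA_p u` and `u` differ by a tangent vector, which `ω₀(v, ·)` annihilates.
  have hdH : fderiv ℝ (fun z => omegaCLM n v (A z)) p = omegaCLM n v := by
    refine ((omegaCLM n v).hasFDerivAt.comp p hAd).fderiv.trans
      (ContinuousLinearMap.ext fun u => ?_)
    have h := hv _ (hAT u)
    rw [← omegaCLM_apply, map_sub, sub_eq_zero] at h
    exact h.symm
  have hdF : fderiv ℝ (fun z => ℓ (A z)) p v = ℓ (fderiv ℝ A p v) :=
    congrArg (fun L => L v) (ℓ.hasFDerivAt.comp p hAd).fderiv
  have hsub : tsupport (fun z => omegaCLM n v (A z)) ⊆ tsupport A :=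
    closure_mono fun z hz hAz => hz (by simp [hAz])
  refine not_rigid hW hpW hp ((omegaCLM n v).contDiff.comp hA)
    (hAc.of_isClosed_subset (isClosed_tsupport _) hsub) (hsub.trans hAW) (ℓ.contDiff.comp hA)
    (fun z hz => by simp [hAN z hz]) (fun z hz => by simp [hAN z hz]) ?_ hr
  change 0 < fderiv ℝ (fun z => ℓ (A z)) p
    (symplGrad n (fderiv ℝ (fun z => omegaCLM n v (A z)) p))
  rw [hdH, symplGrad_omegaCLM, hdF, hℓ]
  simpa using hAv
end
end
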